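/- If the stepsize parameter satisfies 0 < ε < min{1/2, 2π(λ/Λ)²}, then the weighted error of the asynchronous network Newton process decreases linearly in expectation: for all t ≥ 1, E[‖D(x(t−1))^{1/2}(x(t) − x*)‖] ≤ (2(2(1−δ)+αM)(F(x(0)) − F*)/(αm))^{1/2} ((1 − β)^{1/2})^t, where β = αmε(2πλ² − εΛ²)/(λπ) and ‖·‖ is the Euclidean norm. -/

import Mathlib

open Matrix BigOperators

noncomputable section

/-- Second derivative of the `i`-th local objective. -/
def d2 {n : ℕ} (f : Fin n → ℝ → ℝ) (i : Fin n) (s : ℝ) : ℝ := deriv (deriv (f i)) s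

/-- The diagonal matrix `G(x)` with `G(x)_ii = f_i''(x_i)`. -/
def Gmat {n : ℕ} (f : Fin n → ℝ → ℝ) (x : Fin n → ℝ) : Matrix (Fin n) (Fin n) ℝ :=
  Matrix.diagonal (fun i => d2 f i (x i))

/-- The Hessian `H(x) = I − W + αG(x)` of the penalized objective. -/
def Hmat {n : ℕ} (W : Matrix (Fin n) (Fin n) ℝ) (f : Fin n → ℝ → ℝ) (α : ℝ)
    (x : Fin n → ℝ) : Matrix (Fin n) (Fin n) ℝ :=
  1 - W + α • Gmat f x

/-- `B = I − 2W_d + W`. -/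
def Bmat {n : ℕ} (W : Matrix (Fin n) (Fin n) ℝ) : Matrix (Fin n) (Fin n) ℝ :=
  1 - (2 : ℝ) • Matrix.diagonal (fun i => W i i) + W

/-- Diagonal entries of the splitting matrix `D(x) = αG(x) + 2(I − W_d)`. -/
def dEntry {n : ℕ} (W : Matrix (Fin n) (Fin n) ℝ) (f : Fin n → ℝ → ℝ) (α : ℝ)
    (x : Fin n → ℝ) (i : Fin n) : ℝ :=
  α * d2 f i (x i) + 2 * (1 - W i i)

/-- `D(x) = αG(x) + 2(I − W_d)`. -/
def Dmat {n : ℕ} (W : Matrix (Fin n) (Fin n) ℝ) (f : Fin n → ℝ → ℝ) (α : ℝ)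
    (x : Fin n → ℝ) : Matrix (Fin n) (Fin n) ℝ :=
  Matrix.diagonal (dEntry W f α x)

/-- `D(x)^{1/2}`. -/
def Dhalf {n : ℕ} (W : Matrix (Fin n) (Fin n) ℝ) (f : Fin n → ℝ → ℝ) (α : ℝ)
    (x : Fin n → ℝ) : Matrix (Fin n) (Fin n) ℝ :=
  Matrix.diagonal (fun i => Real.sqrt (dEntry W f α x i))

/-- `D(x)^{-1/2}`. -/
def Dinvhalf {n : ℕ} (W : Matrix (Fin n) (Fin n) ℝ) (f : Fin n → ℝ → ℝ) (α : ℝ)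
    (x : Fin n → ℝ) : Matrix (Fin n) (Fin n) ℝ :=
  Matrix.diagonal (fun i => (Real.sqrt (dEntry W f α x i))⁻¹)

/-- The approximate Hessian inverse
`Ĥ(x)⁻¹ = D(x)^{-1/2}(I + D(x)^{-1/2} B D(x)^{-1/2}) D(x)^{-1/2}`. -/
def Hhatinv {n : ℕ} (W : Matrix (Fin n) (Fin n) ℝ) (f : Fin n → ℝ → ℝ) (α : ℝ)
    (x : Fin n → ℝ) : Matrix (Fin n) (Fin n) ℝ :=
  Dinvhalf W f α x * (1 + Dinvhalf W f α x * Bmat W * Dinvhalf W f α x) * Dinvhalf W f α x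

/-- The penalized objective `F(x) = (1/2) xᵀ(I−W)x + α Σᵢ f_i(x_i)`. -/
def Fobj {n : ℕ} (W : Matrix (Fin n) (Fin n) ℝ) (f : Fin n → ℝ → ℝ) (α : ℝ)
    (x : Fin n → ℝ) : ℝ :=
  (1 / 2) * (x ⬝ᵥ ((1 - W).mulVec x)) + α * ∑ i, f i (x i)

/-- The gradient `g(x) = (I − W)x + α (f_i'(x_i))_i` of the penalized objective. -/
def gvec {n : ℕ} (W : Matrix (Fin n) (Fin n) ℝ) (f : Fin n → ℝ → ℝ) (α : ℝ)
    (x : Fin n → ℝ) : Fin n → ℝ :=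
  fun i => ((1 - W).mulVec x) i + α * deriv (f i) (x i)

/-- The asynchronous update `x^(i)`: agent `i` moves along the approximate Newton
direction with stepsize `ε / p i`; other coordinates are unchanged. -/
def upd {n : ℕ} (W : Matrix (Fin n) (Fin n) ℝ) (f : Fin n → ℝ → ℝ) (α : ℝ)
    (p : Fin n → ℝ) (ε : ℝ) (x : Fin n → ℝ) (i : Fin n) : Fin n → ℝ :=
  Function.update x i (x i - (ε / p i) * ((Hhatinv W f α x).mulVec (gvec W f α x)) i)

/-- Euclidean norm on `ℝⁿ`. -/
def enorm {n : ℕ} (v : Fin n → ℝ) : ℝ := Real.sqrt (∑ i, v i ^ 2)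

/-! Gershgorin's theorem gives `0 ≤ B ≤ 2(I - W_d)`, and `Ĥ(x)⁻¹ = D⁻¹ + D⁻¹BD⁻¹`, so that
`λI ≤ Ĥ(x)⁻¹ ≤ ΛI`. Along a single coordinate `F` has curvature at most `1/λ`, hence one random
coordinate step decreases `F` in expectation by a multiple of `‖g(x)‖²`, which strong convexity
bounds below by `2αm(F(x) - F*)`. As the next index is independent of the past, `E[F(x(t)) - F*]`
contracts by the factor `1 - β` at each step. Quadratic growth of `F` at `x*` bounds the weighted
error by a multiple of `√(F(x(t)) - F*)`, and Jensen's inequality for the square root finishes. -/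

theorem add_deriv_mul_sub_le {f : ℝ → ℝ} (hc : ConvexOn ℝ Set.univ f)
    (hf : Differentiable ℝ f) (x y : ℝ) : f x + deriv f x * (y - x) ≤ f y := by
  rcases lt_trichotomy x y with hxy | rfl | hyx
  · have hslope := hc.deriv_le_slope (Set.mem_univ x) (Set.mem_univ y) hxy (hf x)
    rw [slope_def_field, le_div_iff₀ (sub_pos.2 hxy)] at hslope
    linarith
  · simp
  · have hslope := hc.slope_le_deriv (Set.mem_univ y) (Set.mem_univ x) hyx (hf x)
    rw [slope_def_field, div_le_iff₀ (sub_pos.2 hyx)] at hslope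
    linarith

theorem add_deriv_mul_add_sq_le {f : ℝ → ℝ} (hf : Differentiable ℝ f)
    (hf' : Differentiable ℝ (deriv f)) {m : ℝ} (hm : ∀ s, m ≤ deriv (deriv f) s)
    (x v : ℝ) :
    f x + deriv f x * v + m / 2 * v ^ 2 ≤ f (x + v) := by
  have hder : ∀ s, HasDerivAt (fun s => f s - m / 2 * s ^ 2) (deriv f s - m * s) s := fun s =>
    ((hf s).hasDerivAt.sub ((hasDerivAt_pow 2 s).const_mul (m / 2))).congr_deriv (by simp; ring)
  have hder2 : ∀ s, HasDerivAt (fun s => deriv f s - m * s) (deriv (deriv f) s - m) s := fun s =>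
    ((hf' s).hasDerivAt.sub ((hasDerivAt_id s).const_mul m)).congr_deriv (by simp)
  have hderiv : deriv (fun s => f s - m / 2 * s ^ 2) = fun s => deriv f s - m * s :=
    funext fun s => (hder s).deriv
  have hdiff : Differentiable ℝ fun s => f s - m / 2 * s ^ 2 := fun s => (hder s).differentiableAt
  have hconv : ConvexOn ℝ Set.univ fun s => f s - m / 2 * s ^ 2 := by
    refine convexOn_univ_of_deriv2_nonneg hdiff ?_ fun s => ?_
    · rw [hderiv]
      exact fun s => (hder2 s).differentiableAt
    · rw [Function.iterate_succ_apply, Function.iterate_one, hderiv, (hder2 s).deriv]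
      exact sub_nonneg.2 (hm s)
  have htangent := add_deriv_mul_sub_le hconv hdiff x (x + v)
  rw [hderiv] at htangent
  linarith

theorem le_add_deriv_mul_add_sq {f : ℝ → ℝ} (hf : Differentiable ℝ f)
    (hf' : Differentiable ℝ (deriv f)) {M : ℝ} (hM : ∀ s, deriv (deriv f) s ≤ M)
    (x v : ℝ) :
    f (x + v) ≤ f x + deriv f x * v + M / 2 * v ^ 2 := by
  have hneg : deriv (-f) = -deriv f := deriv.neg'
  have := add_deriv_mul_add_sq_le hf.neg (m := -M) (by rw [hneg]; exact hf'.neg)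
    (fun s => by rw [hneg, deriv.neg']; exact neg_le_neg (hM s)) x v
  simp only [hneg, Pi.neg_apply] at this
  linarith

section PosSemidef

open scoped MatrixOrder

variable {ι : Type*}

theorem diagonal_le_diagonal [DecidableEq ι] {d e : ι → ℝ} (h : d ≤ e) :
    diagonal d ≤ diagonal e := by
  rw [Matrix.le_iff, diagonal_sub, posSemidef_diagonal_iff]
  exact fun i => sub_nonneg.2 (h i)

variable [Fintype ι] {A B : Matrix ι ι ℝ}

theorem dotProduct_mulVec_mono (h : A ≤ B) (v : ι → ℝ) : v ⬝ᵥ A *ᵥ v ≤ v ⬝ᵥ B *ᵥ v := by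
  have := (Matrix.le_iff.1 h).dotProduct_mulVec_nonneg v
  rwa [star_trivial, sub_mulVec, dotProduct_sub, sub_nonneg] at this

theorem dotProduct_mulVec_comm_of_isSymm (hA : A.IsSymm) (v w : ι → ℝ) :
    v ⬝ᵥ A *ᵥ w = w ⬝ᵥ A *ᵥ v := by
  rw [dotProduct_mulVec, ← mulVec_transpose, hA.eq, dotProduct_comm]

variable [DecidableEq ι]

theorem nonneg_of_sum_row_abs_le_diag (hA : A.IsSymm)
    (hdom : ∀ i, ∑ j ∈ Finset.univ.erase i, |A i j| ≤ A i i) : 0 ≤ A := by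
  have hA' : A.IsHermitian := isHermitian_iff_isSymm.2 hA
  refine (hA'.posSemidef_iff_eigenvalues_nonneg.2 fun k => ?_).nonneg
  have hev : Module.End.HasEigenvalue (toLin' A) (hA'.eigenvalues k) := by
    rw [Module.End.hasEigenvalue_iff_mem_spectrum, spectrum_toLin']
    exact hA'.eigenvalues_mem_spectrum_real k
  obtain ⟨i, hi⟩ := eigenvalue_mem_ball hev
  rw [Metric.mem_closedBall, Real.dist_eq] at hi
  simp only [Real.norm_eq_abs] at hi
  simp only [Pi.zero_apply]
  linarith [(abs_le.1 hi).1, hdom i]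

theorem mulVec_dotProduct_mulVec_self_le {L : ℝ} (hL : 0 < L) (h0 : 0 ≤ A) (h1 : A ≤ L • 1)
    (v : ι → ℝ) : A *ᵥ v ⬝ᵥ A *ᵥ v ≤ L ^ 2 * (v ⬝ᵥ v) := by
  have hle : ∀ w, w ⬝ᵥ A *ᵥ w ≤ L * (w ⬝ᵥ w) := fun w => by
    simpa [smul_mulVec] using dotProduct_mulVec_mono h1 w
  have hsymm : A.IsSymm := by
    simpa [IsHermitian, IsSymm] using (nonneg_iff_posSemidef.1 h0).isHermitian
  have hcross : v ⬝ᵥ A *ᵥ (A *ᵥ v) = A *ᵥ v ⬝ᵥ A *ᵥ v :=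
    dotProduct_mulVec_comm_of_isSymm hsymm v (A *ᵥ v)
  have hquad := (nonneg_iff_posSemidef.1 h0).dotProduct_mulVec_nonneg (L • v - A *ᵥ v)
  simp only [star_trivial, mulVec_sub, mulVec_smul, sub_dotProduct, dotProduct_sub,
    smul_dotProduct, dotProduct_smul, smul_eq_mul, hcross] at hquad
  refine le_of_mul_le_mul_left ?_ hL
  nlinarith [hle v, hle (A *ᵥ v)]

end PosSemidef

section ApproximateHessian

open scoped MatrixOrder

variable {n : ℕ} {W : Matrix (Fin n) (Fin n) ℝ}

theorem sum_erase_eq_one_sub_diag (hW : W ∈ rowStochastic ℝ (Fin n)) (i : Fin n) :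
    ∑ j ∈ Finset.univ.erase i, W i j = 1 - W i i := by
  rw [Finset.sum_erase_eq_sub (Finset.mem_univ i), sum_row_of_mem_rowStochastic hW]

theorem one_sub_nonneg_of_mem_rowStochastic (hW : W ∈ rowStochastic ℝ (Fin n)) (hsymm : W.IsSymm) :
    0 ≤ 1 - W := by
  refine nonneg_of_sum_row_abs_le_diag (isSymm_one.sub hsymm) fun i => ?_
  rw [Matrix.sub_apply, one_apply_eq, ← sum_erase_eq_one_sub_diag hW]
  refine (Finset.sum_congr rfl fun j hj => ?_).le
  rw [Matrix.sub_apply, one_apply_ne (Finset.ne_of_mem_erase hj).symm, zero_sub, abs_neg,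
    abs_of_nonneg (nonneg_of_mem_rowStochastic hW)]

theorem isSymm_Bmat (hsymm : W.IsSymm) : (Bmat W).IsSymm :=
  (isSymm_one.sub ((isSymm_diagonal _).smul 2)).add hsymm

theorem Bmat_nonneg (hW : W ∈ rowStochastic ℝ (Fin n)) (hsymm : W.IsSymm) : 0 ≤ Bmat W := by
  refine nonneg_of_sum_row_abs_le_diag (isSymm_Bmat hsymm) fun i => ?_
  have hdiag : Bmat W i i = 1 - W i i := by simp [Bmat]; ring
  rw [hdiag, ← sum_erase_eq_one_sub_diag hW]
  refine (Finset.sum_congr rfl fun j hj => ?_).le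
  have hij : i ≠ j := (Finset.ne_of_mem_erase hj).symm
  have hoff : Bmat W i j = W i j := by simp [Bmat, hij]
  rw [hoff, abs_of_nonneg (nonneg_of_mem_rowStochastic hW)]

theorem Bmat_le_diagonal (hW : W ∈ rowStochastic ℝ (Fin n)) (hsymm : W.IsSymm) :
    Bmat W ≤ diagonal fun i => 2 * (1 - W i i) := by
  have hsplit : (diagonal fun i => 2 * (1 - W i i)) - Bmat W = 1 - W := by
    ext i j
    rcases eq_or_ne i j with rfl | hij
    · simp [Bmat]; ring
    · simp [Bmat, hij]
  rw [← sub_nonneg, hsplit]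
  exact one_sub_nonneg_of_mem_rowStochastic hW hsymm

variable {f : Fin n → ℝ → ℝ} {α : ℝ} {x : Fin n → ℝ}

theorem Hhatinv_eq (hd : ∀ i, 0 ≤ dEntry W f α x i) :
    Hhatinv W f α x = diagonal (dEntry W f α x)⁻¹ +
      diagonal (dEntry W f α x)⁻¹ * Bmat W * diagonal (dEntry W f α x)⁻¹ := by
  have hsq : Dinvhalf W f α x * Dinvhalf W f α x = diagonal (dEntry W f α x)⁻¹ := by
    rw [Dinvhalf, diagonal_mul_diagonal]
    congr 1 with i
    rw [← mul_inv, Real.mul_self_sqrt (hd i), Pi.inv_apply]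
  rw [Hhatinv, ← hsq]
  noncomm_ring

theorem inv_smul_one_le_Hhatinv (hW : W ∈ rowStochastic ℝ (Fin n)) (hsymm : W.IsSymm) {b : ℝ}
    (hd : ∀ i, 0 < dEntry W f α x i) (hb : ∀ i, dEntry W f α x i ≤ b) :
    b⁻¹ • 1 ≤ Hhatinv W f α x := by
  have hdiag : b⁻¹ • (1 : Matrix (Fin n) (Fin n) ℝ) ≤ diagonal (dEntry W f α x)⁻¹ := by
    rw [smul_one_eq_diagonal]
    exact diagonal_le_diagonal fun i => inv_anti₀ (hd i) (hb i)
  rw [Hhatinv_eq fun i => (hd i).le]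
  exact hdiag.trans <| le_add_of_nonneg_right <|
    IsSelfAdjoint.conjugate_nonneg (Bmat_nonneg hW hsymm) (isHermitian_diagonal _)

/- `B ≤ 2(I - W_d) ≤ ρD`, so conjugating with `D⁻¹` gives `D⁻¹BD⁻¹ ≤ ρD⁻¹`. -/
theorem Hhatinv_le_smul_one (hW : W ∈ rowStochastic ℝ (Fin n)) (hsymm : W.IsSymm) {a ρ : ℝ}
    (ha : 0 < a) (had : ∀ i, a ≤ dEntry W f α x i) (hρ : 0 ≤ ρ)
    (hρd : ∀ i, 2 * (1 - W i i) ≤ ρ * dEntry W f α x i) :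
    Hhatinv W f α x ≤ ((1 + ρ) / a) • 1 := by
  have hd : ∀ i, 0 < dEntry W f α x i := fun i => ha.trans_le (had i)
  have hB : Bmat W ≤ diagonal (ρ • dEntry W f α x) :=
    (Bmat_le_diagonal hW hsymm).trans (diagonal_le_diagonal hρd)
  have hconj := IsSelfAdjoint.conjugate_le_conjugate hB
    (isHermitian_diagonal (dEntry W f α x)⁻¹)
  rw [Hhatinv_eq fun i => (hd i).le, smul_one_eq_diagonal]
  refine (add_le_add_right hconj _).trans ?_
  rw [diagonal_mul_diagonal, diagonal_mul_diagonal, diagonal_add]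
  refine diagonal_le_diagonal fun i => ?_
  simp only [Pi.inv_apply, Pi.smul_apply, smul_eq_mul]
  have := (hd i).ne'
  calc _ = (1 + ρ) / dEntry W f α x i := by field_simp
    _ ≤ (1 + ρ) / a := by gcongr; exact had i

end ApproximateHessian

section Objective

variable {n : ℕ} {W : Matrix (Fin n) (Fin n) ℝ} {f : Fin n → ℝ → ℝ} {α : ℝ}

theorem Fobj_add (hsymm : W.IsSymm) (x v : Fin n → ℝ) :
    Fobj W f α (x + v) = Fobj W f α x + gvec W f α x ⬝ᵥ v + 1 / 2 * (v ⬝ᵥ (1 - W) *ᵥ v) +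
      α * ∑ i, (f i (x i + v i) - (f i (x i) + deriv (f i) (x i) * v i)) := by
  have hcross : x ⬝ᵥ (1 - W) *ᵥ v = v ⬝ᵥ (1 - W) *ᵥ x :=
    dotProduct_mulVec_comm_of_isSymm (isSymm_one.sub hsymm) x v
  have hgrad : gvec W f α x ⬝ᵥ v = v ⬝ᵥ (1 - W) *ᵥ x + α * ∑ i, deriv (f i) (x i) * v i := by
    rw [dotProduct_comm v]
    simp only [dotProduct, gvec, add_mul, Finset.sum_add_distrib, Finset.mul_sum, mul_assoc]
  rw [hgrad, Fobj, Fobj, mulVec_add, dotProduct_add, add_dotProduct, add_dotProduct, hcross]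
  simp only [Finset.sum_sub_distrib, Finset.sum_add_distrib, Pi.add_apply]
  ring

open scoped MatrixOrder in
theorem Fobj_add_quadratic_le (hW : W ∈ rowStochastic ℝ (Fin n)) (hsymm : W.IsSymm) (hα : 0 ≤ α)
    (hf : ∀ i, Differentiable ℝ (f i)) (hf' : ∀ i, Differentiable ℝ (deriv (f i))) {m : ℝ}
    (hm : ∀ i s, m ≤ d2 f i s) (x v : Fin n → ℝ) :
    Fobj W f α x + gvec W f α x ⬝ᵥ v + α * m / 2 * (v ⬝ᵥ v) ≤ Fobj W f α (x + v) := by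
  have hlap : 0 ≤ v ⬝ᵥ (1 - W) *ᵥ v := by
    simpa using dotProduct_mulVec_mono (one_sub_nonneg_of_mem_rowStochastic hW hsymm) v
  have hlocal : m / 2 * (v ⬝ᵥ v) ≤
      ∑ i, (f i (x i + v i) - (f i (x i) + deriv (f i) (x i) * v i)) := by
    rw [dotProduct, Finset.mul_sum]
    refine Finset.sum_le_sum fun i _ => ?_
    linarith [add_deriv_mul_add_sq_le (hf i) (hf' i) (hm i) (x i) (v i)]
  rw [Fobj_add hsymm]
  linarith [mul_le_mul_of_nonneg_left hlocal hα]

theorem Fobj_update_le (hsymm : W.IsSymm) (hα : 0 ≤ α)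
    (hf : ∀ i, Differentiable ℝ (f i)) (hf' : ∀ i, Differentiable ℝ (deriv (f i))) {M : ℝ}
    (hM : ∀ i s, d2 f i s ≤ M) (x : Fin n → ℝ) (i : Fin n) (s : ℝ) :
    Fobj W f α (Function.update x i (x i + s)) ≤
      Fobj W f α x + gvec W f α x i * s + (1 - W i i + α * M) / 2 * s ^ 2 := by
  have hupdate : Function.update x i (x i + s) = x + Pi.single i s := by
    ext j
    rcases eq_or_ne j i with rfl | hj <;> simp [*]
  have hlap : Pi.single i s ⬝ᵥ (1 - W) *ᵥ Pi.single i s = (1 - W i i) * s ^ 2 := by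
    simp only [single_dotProduct, mulVec_single, Pi.smul_apply, col_apply, Matrix.sub_apply,
      one_apply_eq, MulOpposite.smul_eq_mul_unop, MulOpposite.unop_op]
    ring
  have hlocal : ∑ j, (f j (x j + (Pi.single i s : Fin n → ℝ) j) -
      (f j (x j) + deriv (f j) (x j) * (Pi.single i s : Fin n → ℝ) j)) =
      f i (x i + s) - (f i (x i) + deriv (f i) (x i) * s) := by
    rw [Finset.sum_eq_single i (fun j _ hj => by simp [hj]) (by simp), Pi.single_eq_same]
  have htaylor : α * (f i (x i + s) - (f i (x i) + deriv (f i) (x i) * s)) ≤ α * (M / 2 * s ^ 2) :=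
    mul_le_mul_of_nonneg_left
      (by linarith [le_add_deriv_mul_add_sq (hf i) (hf' i) (hM i) (x i) s]) hα
  rw [hupdate, Fobj_add hsymm, hlap, hlocal, dotProduct_single]
  linarith

theorem gvec_eq_zero_of_forall_le (hsymm : W.IsSymm) (hα : 0 ≤ α)
    (hf : ∀ i, Differentiable ℝ (f i)) (hf' : ∀ i, Differentiable ℝ (deriv (f i))) {M : ℝ}
    (hM : ∀ i s, d2 f i s ≤ M) {x : Fin n → ℝ} (hmin : ∀ y, Fobj W f α x ≤ Fobj W f α y) :
    gvec W f α x = 0 := by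
  ext i
  have hquad : ∀ s, 0 ≤ (1 - W i i + α * M) / 2 * (s * s) + gvec W f α x i * s + 0 := fun s => by
    linarith [(hmin _).trans (Fobj_update_le hsymm hα hf hf' hM x i s)]
  have hdiscrim := discrim_le_zero hquad
  rw [discrim, mul_zero, sub_zero] at hdiscrim
  exact sq_nonpos_iff _ |>.1 hdiscrim

theorem quadratic_growth_of_forall_le (hW : W ∈ rowStochastic ℝ (Fin n)) (hsymm : W.IsSymm)
    (hα : 0 ≤ α) (hf : ∀ i, Differentiable ℝ (f i)) (hf' : ∀ i, Differentiable ℝ (deriv (f i)))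
    {m M : ℝ} (hd2 : ∀ i s, m ≤ d2 f i s ∧ d2 f i s ≤ M) {xstar : Fin n → ℝ}
    (hmin : ∀ y, Fobj W f α xstar ≤ Fobj W f α y) (x : Fin n → ℝ) :
    α * m / 2 * ((x - xstar) ⬝ᵥ (x - xstar)) ≤ Fobj W f α x - Fobj W f α xstar := by
  have hgrad := gvec_eq_zero_of_forall_le hsymm hα hf hf' (fun i s => (hd2 i s).2) hmin
  have := Fobj_add_quadratic_le hW hsymm hα hf hf' (fun i s => (hd2 i s).1) xstar (x - xstar)
  rw [hgrad, zero_dotProduct, add_zero, add_sub_cancel] at this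
  linarith

theorem enorm_Dhalf_mulVec_le {y v : Fin n → ℝ} {K : ℝ} (hd : ∀ i, 0 ≤ dEntry W f α y i)
    (hK : ∀ i, dEntry W f α y i ≤ K) :
    _root_.enorm (Dhalf W f α y *ᵥ v) ≤ √(K * (v ⬝ᵥ v)) := by
  refine Real.sqrt_le_sqrt ?_
  rw [dotProduct, Finset.mul_sum]
  refine Finset.sum_le_sum fun i _ => ?_
  rw [Dhalf, mulVec_diagonal, mul_pow, Real.sq_sqrt (hd i), ← sq]
  gcongr
  exact hK i

end Objective

section CoordinateDescent

variable {ι : Type*} [Fintype ι]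

theorem two_mul_sub_le_dotProduct_self {c a b : ℝ} {g v : ι → ℝ} (hc : 0 ≤ c)
    (h : a + g ⬝ᵥ v + c / 2 * (v ⬝ᵥ v) ≤ b) : 2 * c * (a - b) ≤ g ⬝ᵥ g := by
  have hsq : 0 ≤ (g + c • v) ⬝ᵥ (g + c • v) := by
    simpa using dotProduct_star_self_nonneg (g + c • v)
  simp only [add_dotProduct, dotProduct_add, smul_dotProduct, dotProduct_smul, smul_eq_mul,
    dotProduct_comm v g] at hsq
  linarith [mul_le_mul_of_nonneg_left h hc]

variable [DecidableEq ι] {F : (ι → ℝ) → ℝ} {x g p : ι → ℝ} {L q ε : ℝ}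

theorem sum_mul_update_le
    (hF : ∀ i s, F (Function.update x i (x i + s)) ≤ F x + g i * s + L / 2 * s ^ 2)
    (hL : 0 ≤ L) (hq : 0 < q) (hqp : ∀ i, q ≤ p i) (hp : ∑ i, p i = 1) (d : ι → ℝ) :
    ∑ i, p i * F (Function.update x i (x i - ε / p i * d i)) ≤
      F x - ε * (g ⬝ᵥ d) + L * ε ^ 2 / (2 * q) * (d ⬝ᵥ d) := by
  have hcoord : ∀ i, p i * F (Function.update x i (x i - ε / p i * d i)) ≤
      p i * F x - ε * (g i * d i) + L * ε ^ 2 / (2 * q) * (d i * d i) := fun i => by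
    have hpi : 0 < p i := hq.trans_le (hqp i)
    calc p i * F (Function.update x i (x i - ε / p i * d i))
        ≤ p i * (F x + g i * (-(ε / p i * d i)) + L / 2 * (-(ε / p i * d i)) ^ 2) := by
          rw [sub_eq_add_neg]
          exact mul_le_mul_of_nonneg_left (hF i _) hpi.le
      _ = p i * F x - ε * (g i * d i) + L * ε ^ 2 / (2 * p i) * (d i * d i) := by
          field_simp
          ring
      _ ≤ _ := by
          gcongr
          · exact mul_self_nonneg (d i)
          · exact hqp i
  refine (Finset.sum_le_sum fun i _ => hcoord i).trans_eq ?_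
  rw [Finset.sum_add_distrib, Finset.sum_sub_distrib, ← Finset.sum_mul, hp, one_mul,
    ← Finset.mul_sum, ← Finset.mul_sum, dotProduct, dotProduct]

open scoped MatrixOrder in
theorem sum_mul_update_mulVec_sub_le {A : Matrix ι ι ℝ} {c l u Fmin : ℝ}
    (hF : ∀ i s, F (Function.update x i (x i + s)) ≤ F x + g i * s + L / 2 * s ^ 2)
    (hL : 0 ≤ L) (hq : 0 < q) (hqp : ∀ i, q ≤ p i) (hp : ∑ i, p i = 1)
    (hl : 0 ≤ l) (hu : 0 < u) (hlA : l • 1 ≤ A) (hAu : A ≤ u • 1)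
    (hPL : 2 * c * (F x - Fmin) ≤ g ⬝ᵥ g) (hε : 0 ≤ ε) (hεle : L * ε * u ^ 2 ≤ 2 * q * l) :
    ∑ i, p i * (F (Function.update x i (x i - ε / p i * (A *ᵥ g) i)) - Fmin) ≤
      (1 - c * ε * (2 * q * l - L * ε * u ^ 2) / q) * (F x - Fmin) := by
  have hA : 0 ≤ A := (smul_nonneg hl zero_le_one).trans hlA
  have hlow : l * (g ⬝ᵥ g) ≤ g ⬝ᵥ A *ᵥ g := by
    simpa [smul_mulVec] using dotProduct_mulVec_mono hlA g
  have hup : A *ᵥ g ⬝ᵥ A *ᵥ g ≤ u ^ 2 * (g ⬝ᵥ g) := mulVec_dotProduct_mulVec_self_le hu hA hAu g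
  simp only [mul_sub, Finset.sum_sub_distrib, ← Finset.sum_mul, hp, one_mul]
  calc _ ≤ F x - ε * (g ⬝ᵥ A *ᵥ g) + L * ε ^ 2 / (2 * q) * (A *ᵥ g ⬝ᵥ A *ᵥ g) - Fmin := by
        gcongr
        exact sum_mul_update_le hF hL hq hqp hp (A *ᵥ g)
    _ ≤ F x - ε * (l * (g ⬝ᵥ g)) + L * ε ^ 2 / (2 * q) * (u ^ 2 * (g ⬝ᵥ g)) - Fmin := by gcongr
    _ = F x - Fmin - ε * (2 * q * l - L * ε * u ^ 2) / (2 * q) * (g ⬝ᵥ g) := by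
        field_simp
        ring
    _ ≤ F x - Fmin - ε * (2 * q * l - L * ε * u ^ 2) / (2 * q) * (2 * c * (F x - Fmin)) := by
        have := sub_nonneg.2 hεle
        gcongr
    _ = _ := by field_simp

/- With `y = cεl`, the numerator is at most `l(2qy - y²) ≤ lq²`. -/
theorem mul_two_mul_sub_div_le_one {c l u : ℝ} (hq : 0 < q) (hq1 : q ≤ 1) (hc : 0 ≤ c)
    (hl : 0 < l) (hcl : c * l ≤ 1) (hlu : l ≤ u) (hε : 0 ≤ ε) :
    c * ε * (2 * q * l ^ 2 - ε * u ^ 2) / (l * q) ≤ 1 := by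
  rw [div_le_one (mul_pos hl hq)]
  calc c * ε * (2 * q * l ^ 2 - ε * u ^ 2)
      ≤ c * ε * (2 * q * l ^ 2 - c * l * ε * l ^ 2) := by
        gcongr
        exact mul_le_of_le_one_left hε hcl
    _ = l * (q ^ 2 - (q - c * ε * l) ^ 2) := by ring
    _ ≤ l * q ^ 2 := by
        gcongr
        exact sub_le_self _ (sq_nonneg _)
    _ ≤ l * q := by
        gcongr
        exact pow_le_of_le_one hq.le hq1 two_ne_zero

end CoordinateDescent

section RandomRecursion

open MeasureTheory ProbabilityTheory

variable {Ω ι E : Type*} {U : E → ι → E} {J : ℕ → Ω → ι} {X : ℕ → Ω → E} {x₀ : E}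

theorem exists_eq_comp_restrict_Iic (hX0 : ∀ ω, X 0 ω = x₀)
    (hX : ∀ t ω, X (t + 1) ω = U (X t ω) (J (t + 1) ω)) (t : ℕ) :
    ∃ Φ : (Finset.Iic t → ι) → E, ∀ ω, X t ω = Φ fun s => J s ω := by
  induction t with
  | zero => exact ⟨fun _ => x₀, hX0⟩
  | succ t ih =>
    obtain ⟨Φ, hΦ⟩ := ih
    refine ⟨fun y => U (Φ (Preorder.frestrictLe₂ (π := fun _ => ι) t.le_succ y))
      (y ⟨t + 1, Finset.mem_Iic.2 le_rfl⟩), fun ω => ?_⟩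
    rw [hX, hΦ]
    rfl

variable [MeasurableSpace Ω] {μ : Measure Ω} [IsProbabilityMeasure μ]

theorem integral_comp_eq_integral_sum_of_indepFun {S T : Type*} [MeasurableSpace S]
    [MeasurableSpace T] [Finite S] [Fintype T] [MeasurableSingletonClass S]
    [MeasurableSingletonClass T] {Y : Ω → S} {Z : Ω → T} (hY : Measurable Y) (hZ : Measurable Z)
    (hYZ : Y ⟂ᵢ[μ] Z) (φ : S → T → ℝ) :
    ∫ ω, φ (Y ω) (Z ω) ∂μ = ∫ ω, ∑ i, μ.real (Z ⁻¹' {i}) * φ (Y ω) i ∂μ := by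
  have := Measure.isProbabilityMeasure_map hY.aemeasurable (μ := μ)
  have := Measure.isProbabilityMeasure_map hZ.aemeasurable (μ := μ)
  calc ∫ ω, φ (Y ω) (Z ω) ∂μ
      = ∫ z, φ z.1 z.2 ∂μ.map fun ω => (Y ω, Z ω) :=
        (integral_map (hY.prodMk hZ).aemeasurable (Measurable.of_discrete
          (f := fun z : S × T => φ z.1 z.2)).aestronglyMeasurable).symm
    _ = ∫ y, ∫ z, φ y z ∂μ.map Z ∂μ.map Y := by
        rw [hYZ.map_prod_eq_prod_map_map hY.aemeasurable hZ.aemeasurable,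
          integral_prod _ Integrable.of_finite]
    _ = ∫ y, ∑ i, μ.real (Z ⁻¹' {i}) * φ y i ∂μ.map Y := by
        congr 1 with y
        rw [integral_fintype .of_finite]
        simp only [map_measureReal_apply hZ (measurableSet_singleton _), smul_eq_mul]
    _ = _ := integral_map hY.aemeasurable
        (Measurable.of_discrete (f := fun y => ∑ i, _ * φ y i)).aestronglyMeasurable

variable [MeasurableSpace ι] [MeasurableSingletonClass ι]

theorem integrable_comp_of_forall_succ_eq [Finite ι] (hJ : ∀ t, Measurable (J t))
    (hX0 : ∀ ω, X 0 ω = x₀) (hX : ∀ t ω, X (t + 1) ω = U (X t ω) (J (t + 1) ω))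
    (V : E → ℝ) (t : ℕ) : Integrable (fun ω => V (X t ω)) μ := by
  obtain ⟨Φ, hΦ⟩ := exists_eq_comp_restrict_Iic hX0 hX t
  simp only [hΦ]
  exact (Integrable.of_finite (f := fun y => V (Φ y))).comp_measurable
    (measurable_pi_iff.2 fun s => hJ s)

variable [Fintype ι]

theorem integral_comp_succ_eq {p : ι → ℝ} (hJ : ∀ t, Measurable (J t))
    (hindep : iIndepFun J μ) (hp : ∀ t i, μ.real (J t ⁻¹' {i}) = p i)
    (hX0 : ∀ ω, X 0 ω = x₀) (hX : ∀ t ω, X (t + 1) ω = U (X t ω) (J (t + 1) ω))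
    (V : E → ℝ) (t : ℕ) :
    ∫ ω, V (X (t + 1) ω) ∂μ = ∫ ω, ∑ i, p i * V (U (X t ω) i) ∂μ := by
  obtain ⟨Φ, hΦ⟩ := exists_eq_comp_restrict_Iic hX0 hX t
  have hhist : Measurable fun ω (s : Finset.Iic t) => J s ω := measurable_pi_iff.2 fun s => hJ s
  have hnext : (fun ω (s : Finset.Iic t) => J s ω) ⟂ᵢ[μ] J (t + 1) :=
    (hindep.indepFun_finset (Finset.Iic t) {t + 1} (by simp) hJ).comp measurable_id
      (measurable_pi_apply (⟨t + 1, Finset.mem_singleton_self _⟩ : ({t + 1} : Finset ℕ)))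
  simp only [hX, hΦ, ← hp (t + 1)]
  exact integral_comp_eq_integral_sum_of_indepFun hhist (hJ _) hnext fun y i => V (U (Φ y) i)

theorem integral_comp_le_pow_mul {p : ι → ℝ} (hJ : ∀ t, Measurable (J t))
    (hindep : iIndepFun J μ) (hp : ∀ t i, μ.real (J t ⁻¹' {i}) = p i)
    (hX0 : ∀ ω, X 0 ω = x₀) (hX : ∀ t ω, X (t + 1) ω = U (X t ω) (J (t + 1) ω))
    {V : E → ℝ} {r : ℝ} (hr : 0 ≤ r) (hV : ∀ x, ∑ i, p i * V (U x i) ≤ r * V x) (t : ℕ) :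
    ∫ ω, V (X t ω) ∂μ ≤ r ^ t * V x₀ := by
  induction t with
  | zero => simp [hX0]
  | succ t ih =>
    calc ∫ ω, V (X (t + 1) ω) ∂μ = ∫ ω, ∑ i, p i * V (U (X t ω) i) ∂μ :=
          integral_comp_succ_eq hJ hindep hp hX0 hX V t
      _ ≤ ∫ ω, r * V (X t ω) ∂μ := integral_mono
          (integrable_comp_of_forall_succ_eq hJ hX0 hX (fun x => ∑ i, p i * V (U x i)) t)
          (integrable_comp_of_forall_succ_eq hJ hX0 hX (fun x => r * V x) t) fun ω => hV (X t ω)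
      _ = r * ∫ ω, V (X t ω) ∂μ := integral_const_mul r _
      _ ≤ r * (r ^ t * V x₀) := by gcongr
      _ = r ^ (t + 1) * V x₀ := by ring

theorem integral_le_sqrt_mul_sqrt_pow {p : ι → ℝ} (hJ : ∀ t, Measurable (J t))
    (hindep : iIndepFun J μ) (hp : ∀ t i, μ.real (J t ⁻¹' {i}) = p i)
    (hX0 : ∀ ω, X 0 ω = x₀) (hX : ∀ t ω, X (t + 1) ω = U (X t ω) (J (t + 1) ω))
    {V : E → ℝ} {r C : ℝ} (hr : 0 ≤ r) (hC : 0 ≤ C) (hV0 : ∀ x, 0 ≤ V x)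
    (hV : ∀ x, ∑ i, p i * V (U x i) ≤ r * V x) {t : ℕ} {e : Ω → ℝ} (he0 : ∀ ω, 0 ≤ e ω)
    (he : ∀ ω, e ω ≤ √(C * V (X t ω))) : ∫ ω, e ω ∂μ ≤ √(C * V x₀) * √r ^ t := by
  have hint (h : E → ℝ) := integrable_comp_of_forall_succ_eq (μ := μ) hJ hX0 hX h t
  calc ∫ ω, e ω ∂μ ≤ ∫ ω, √(C * V (X t ω)) ∂μ :=
        integral_mono_of_nonneg (.of_forall he0) (hint fun x => √(C * V x)) (.of_forall he)
    _ ≤ √(∫ ω, C * V (X t ω) ∂μ) :=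
        Real.strictConcaveOn_sqrt.concaveOn.le_map_integral Real.continuous_sqrt.continuousOn
          isClosed_Ici (.of_forall fun ω => mul_nonneg hC (hV0 (X t ω))) (hint fun x => C * V x)
          (hint fun x => √(C * V x))
    _ ≤ √(C * (r ^ t * V x₀)) := by
        rw [integral_const_mul]
        gcongr
        exact integral_comp_le_pow_mul hJ hindep hp hX0 hX hr hV t
    _ = √(C * V x₀ * (√r ^ t) ^ 2) := by
        rw [pow_right_comm, Real.sq_sqrt hr]
        ring_nf
    _ = √(C * V x₀) * √r ^ t := by
        rw [Real.sqrt_mul (mul_nonneg hC (hV0 x₀)), Real.sqrt_sq (by positivity)]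

end RandomRecursion

section NetworkNewton

variable {n : ℕ} {W : Matrix (Fin n) (Fin n) ℝ} {f : Fin n → ℝ → ℝ} {α m M : ℝ}

theorem le_dEntry {Δ : ℝ} {i : Fin n} (hα : 0 ≤ α) (hm : ∀ i s, m ≤ d2 f i s) (hΔ : W i i ≤ Δ)
    (x : Fin n → ℝ) : 2 * (1 - Δ) + α * m ≤ dEntry W f α x i := by
  rw [dEntry]
  linarith [mul_le_mul_of_nonneg_left (hm i (x i)) hα]

theorem dEntry_le {δ : ℝ} {i : Fin n} (hα : 0 ≤ α) (hM : ∀ i s, d2 f i s ≤ M) (hδ : δ ≤ W i i)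
    (x : Fin n → ℝ) : dEntry W f α x i ≤ 2 * (1 - δ) + α * M := by
  rw [dEntry]
  linarith [mul_le_mul_of_nonneg_left (hM i (x i)) hα]

theorem two_mul_one_sub_le_mul_dEntry {δ : ℝ} {i : Fin n} (hα : 0 < α) (hm0 : 0 < m)
    (hm : ∀ i s, m ≤ d2 f i s) (hδ : δ ≤ W i i) (hδ1 : δ ≤ 1) (x : Fin n → ℝ) :
    2 * (1 - W i i) ≤ 2 * (1 - δ) / (2 * (1 - δ) + α * m) * dEntry W f α x i := by
  have := sub_nonneg.2 hδ1
  have hαm : 0 < α * m := mul_pos hα hm0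
  rw [div_mul_eq_mul_div, le_div_iff₀ (by positivity)]
  calc 2 * (1 - W i i) * (2 * (1 - δ) + α * m)
      ≤ 2 * (1 - δ) * (2 * (1 - W i i) + α * m) := by
        linarith [mul_le_mul_of_nonneg_left hδ hαm.le]
    _ ≤ 2 * (1 - δ) * dEntry W f α x i := by
        gcongr
        exact le_dEntry hα.le hm le_rfl x

theorem one_div_le_one_add_div {δ Δ c C : ℝ} (hδΔ : δ ≤ Δ) (hΔ : Δ ≤ 1) (hc : 0 < c) (hcC : c ≤ C) :
    1 / (2 * (1 - δ) + C) ≤ (1 + 2 * (1 - δ) / (2 * (1 - δ) + c)) / (2 * (1 - Δ) + c) := by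
  have := sub_nonneg.2 (hδΔ.trans hΔ)
  have := sub_nonneg.2 hΔ
  gcongr
  exact le_add_of_nonneg_right (by positivity)

theorem enorm_Dhalf_mulVec_sub_le (hW : W ∈ rowStochastic ℝ (Fin n)) (hsymm : W.IsSymm)
    {δ : ℝ} (hδ : ∀ i, δ ≤ W i i)
    (hf : ∀ i, Differentiable ℝ (f i)) (hf' : ∀ i, Differentiable ℝ (deriv (f i)))
    (hm : 0 < m) (hd2 : ∀ i s, m ≤ d2 f i s ∧ d2 f i s ≤ M) (hα : 0 < α) {xstar : Fin n → ℝ}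
    (hmin : ∀ y, Fobj W f α xstar ≤ Fobj W f α y) (hK : 0 ≤ 2 * (1 - δ) + α * M)
    (x y : Fin n → ℝ) :
    _root_.enorm (Dhalf W f α y *ᵥ (x - xstar)) ≤
      √(2 * (2 * (1 - δ) + α * M) / (α * m) * (Fobj W f α x - Fobj W f α xstar)) := by
  have hαm : 0 < α * m := mul_pos hα hm
  have hd : ∀ i, 0 ≤ dEntry W f α y i := fun i =>
    (by linarith : 0 ≤ 2 * (1 - 1) + α * m).trans <|
      le_dEntry hα.le (fun i s => (hd2 i s).1) (le_one_of_mem_rowStochastic hW) y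
  have hdK : ∀ i, dEntry W f α y i ≤ 2 * (1 - δ) + α * M := fun i =>
    dEntry_le hα.le (fun i s => (hd2 i s).2) (hδ i) y
  refine (enorm_Dhalf_mulVec_le hd hdK).trans (Real.sqrt_le_sqrt ?_)
  rw [div_mul_eq_mul_div, le_div_iff₀ hαm]
  linarith [mul_le_mul_of_nonneg_left
    (quadratic_growth_of_forall_le hW hsymm hα.le hf hf' hd2 hmin x) hK]

theorem two_mul_Fobj_sub_le (hW : W ∈ rowStochastic ℝ (Fin n)) (hsymm : W.IsSymm) (hα : 0 ≤ α)
    (hf : ∀ i, Differentiable ℝ (f i)) (hf' : ∀ i, Differentiable ℝ (deriv (f i))) (hm : 0 ≤ m)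
    (hd2 : ∀ i s, m ≤ d2 f i s) (x y : Fin n → ℝ) :
    2 * (α * m) * (Fobj W f α x - Fobj W f α y) ≤ gvec W f α x ⬝ᵥ gvec W f α x := by
  refine two_mul_sub_le_dotProduct_self (v := y - x) (mul_nonneg hα hm) ?_
  simpa using Fobj_add_quadratic_le hW hsymm hα hf hf' hd2 x (y - x)

open scoped MatrixOrder in
theorem sum_mul_Fobj_upd_sub_le (hW : W ∈ rowStochastic ℝ (Fin n)) (hsymm : W.IsSymm)
    {δ Δ ρ lam Lam : ℝ} (hδ : δ ≤ 1) (hΔ : Δ ≤ 1) (hWdiag : ∀ i, δ ≤ W i i ∧ W i i ≤ Δ)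
    (hf : ∀ i, Differentiable ℝ (f i)) (hf' : ∀ i, Differentiable ℝ (deriv (f i)))
    (hm : 0 < m) (hd2 : ∀ i s, m ≤ d2 f i s ∧ d2 f i s ≤ M) (hα : 0 < α)
    (hρ : ρ = 2 * (1 - δ) / (2 * (1 - δ) + α * m)) (hlam : lam = 1 / (2 * (1 - δ) + α * M))
    (hLam : Lam = (1 + ρ) / (2 * (1 - Δ) + α * m)) (hlam0 : 0 < lam) (hLam0 : 0 < Lam)
    {p : Fin n → ℝ} {q ε : ℝ} (hq : 0 < q) (hqp : ∀ i, q ≤ p i) (hp : ∑ i, p i = 1) (hε : 0 ≤ ε)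
    (hεle : ε ≤ 2 * q * (lam / Lam) ^ 2) (x y : Fin n → ℝ) :
    ∑ i, p i * (Fobj W f α (upd W f α p ε x i) - Fobj W f α y) ≤
      (1 - α * m * ε * (2 * q * lam ^ 2 - ε * Lam ^ 2) / (lam * q)) *
        (Fobj W f α x - Fobj W f α y) := by
  have hαm : 0 < α * m := mul_pos hα hm
  have hδ0 : 0 ≤ 1 - δ := sub_nonneg.2 hδ
  have hK : 2 * (1 - δ) + α * M = lam⁻¹ := by rw [hlam, one_div, inv_inv]
  have hρ0 : 0 ≤ ρ := by rw [hρ]; positivity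
  have ha : 0 < 2 * (1 - Δ) + α * m := by linarith
  have had : ∀ i, 2 * (1 - Δ) + α * m ≤ dEntry W f α x i := fun i =>
    le_dEntry hα.le (fun i s => (hd2 i s).1) (hWdiag i).2 x
  have hlow : lam • 1 ≤ Hhatinv W f α x := by
    rw [hlam, one_div]
    exact inv_smul_one_le_Hhatinv hW hsymm (fun i => ha.trans_le (had i)) fun i =>
      dEntry_le hα.le (fun i s => (hd2 i s).2) (hWdiag i).1 x
  have hup : Hhatinv W f α x ≤ Lam • 1 := by
    rw [hLam]
    exact Hhatinv_le_smul_one hW hsymm ha had hρ0 fun i =>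
      hρ ▸ two_mul_one_sub_le_mul_dEntry hα hm (fun i s => (hd2 i s).1) (hWdiag i).1 hδ x
  have hcoord : ∀ i s, Fobj W f α (Function.update x i (x i + s)) ≤
      Fobj W f α x + gvec W f α x i * s + lam⁻¹ / 2 * s ^ 2 := fun i s => by
    refine (Fobj_update_le hsymm hα.le hf hf' (fun i s => (hd2 i s).2) x i s).trans ?_
    gcongr
    linarith [(hWdiag i).1]
  have hPL := two_mul_Fobj_sub_le hW hsymm hα.le hf hf' hm.le (fun i s => (hd2 i s).1) x y
  have hstep : lam⁻¹ * ε * Lam ^ 2 ≤ 2 * q * lam := by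
    rw [div_pow, ← mul_div_assoc, le_div_iff₀ (by positivity)] at hεle
    rw [mul_assoc, inv_mul_le_iff₀ hlam0]
    linarith
  refine (sum_mul_update_mulVec_sub_le hcoord (inv_nonneg.2 hlam0.le) hq hqp hp hlam0.le hLam0
    hlow hup hPL hε hstep).trans_eq ?_
  field_simp

end NetworkNewton

theorem stmt18_general {n : ℕ} {W : Matrix (Fin n) (Fin n) ℝ} (hWsymm : W.IsSymm)
    (hW : W ∈ rowStochastic ℝ (Fin n)) {δ Δ : ℝ} (hΔ : Δ ≤ 1)
    (hWdiag : ∀ i, δ ≤ W i i ∧ W i i ≤ Δ)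
    {f : Fin n → ℝ → ℝ} (hf : ∀ i, Differentiable ℝ (f i))
    (hf' : ∀ i, Differentiable ℝ (deriv (f i)))
    {m M : ℝ} (hm : 0 < m) (hd2 : ∀ i s, m ≤ d2 f i s ∧ d2 f i s ≤ M)
    {α : ℝ} (hα : 0 < α)
    {p : Fin n → ℝ} {pmin : ℝ} (hpmin : 0 < pmin) (hp : ∀ i, pmin ≤ p i) (hpsum : ∑ i, p i = 1)
    {xstar : Fin n → ℝ} (hmin : ∀ y, Fobj W f α xstar ≤ Fobj W f α y)
    {ρ lam Lam : ℝ} (hρ : ρ = 2 * (1 - δ) / (2 * (1 - δ) + α * m))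
    (hlam : lam = 1 / (2 * (1 - δ) + α * M))
    (hLam : Lam = (1 + ρ) / (2 * (1 - Δ) + α * m))
    {ε : ℝ} (hε : 0 ≤ ε) (hεle : ε ≤ 2 * pmin * (lam / Lam) ^ 2)
    {β : ℝ} (hβ : β = α * m * ε * (2 * pmin * lam ^ 2 - ε * Lam ^ 2) / (lam * pmin))
    {Ω : Type*} [MeasurableSpace Ω] {μ : MeasureTheory.Measure Ω}
    [MeasureTheory.IsProbabilityMeasure μ]
    {I : ℕ → Ω → Fin n} (hImeas : ∀ t, Measurable (I t))
    (hIindep : ProbabilityTheory.iIndepFun I μ)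
    (hIdist : ∀ t i, μ {ω | I t ω = i} = ENNReal.ofReal (p i))
    {x0 : Fin n → ℝ} {X : ℕ → Ω → Fin n → ℝ} (hX0 : ∀ ω, X 0 ω = x0)
    (hXsucc : ∀ (t : ℕ) (ω : Ω), X (t + 1) ω = upd W f α p ε (X t ω) (I (t + 1) ω))
    (s t : ℕ) :
    ∫ ω, _root_.enorm (Dhalf W f α (X s ω) *ᵥ (X t ω - xstar)) ∂μ ≤
      √(2 * (2 * (1 - δ) + α * M) * (Fobj W f α x0 - Fobj W f α xstar) / (α * m)) *
        √(1 - β) ^ t := by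
  obtain ⟨i⟩ : Nonempty (Fin n) := not_isEmpty_iff.1 fun _ => by simp at hpsum
  have hδΔ : δ ≤ Δ := (hWdiag i).1.trans (hWdiag i).2
  have hmM : m ≤ M := (hd2 i 0).1.trans (hd2 i 0).2
  have hpmin1 : pmin ≤ 1 := (hp i).trans <|
    hpsum ▸ Finset.single_le_sum (fun j _ => hpmin.le.trans (hp j)) (Finset.mem_univ i)
  have hαm : 0 < α * m := mul_pos hα hm
  have hαmM : α * m ≤ α * M := mul_le_mul_of_nonneg_left hmM hα.le
  have hK0 : 0 < 2 * (1 - δ) + α * M := by linarith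
  have hlam0 : 0 < lam := hlam ▸ one_div_pos.2 hK0
  have hαmlam : α * m * lam ≤ 1 := by
    rw [hlam, mul_one_div, div_le_one hK0]
    linarith
  have hlamLam : lam ≤ Lam := by
    rw [hlam, hLam, hρ]
    exact one_div_le_one_add_div hδΔ hΔ hαm hαmM
  have hβ1 : β ≤ 1 := hβ ▸ mul_two_mul_sub_div_le_one hpmin hpmin1 hαm.le hlam0 hαmlam hlamLam hε
  have hlaw : ∀ t i, μ.real (I t ⁻¹' {i}) = p i := fun t i =>
    (congrArg ENNReal.toReal (hIdist t i)).trans (ENNReal.toReal_ofReal (hpmin.le.trans (hp i)))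
  rw [mul_div_right_comm]
  refine integral_le_sqrt_mul_sqrt_pow (V := fun x => Fobj W f α x - Fobj W f α xstar)
    hImeas hIindep hlaw hX0 hXsucc (sub_nonneg.2 hβ1) (by positivity)
    (fun x => sub_nonneg.2 (hmin x)) (fun x => ?_) (fun ω => Real.sqrt_nonneg _) fun ω => ?_
  · exact hβ ▸ sum_mul_Fobj_upd_sub_le hW hWsymm (hδΔ.trans hΔ) hΔ hWdiag hf hf' hm hd2 hα hρ hlam
      hLam hlam0 (hlam0.trans_le hlamLam) hpmin hp hpsum hε hεle x xstar
  · exact enorm_Dhalf_mulVec_sub_le hW hWsymm (fun i => (hWdiag i).1) hf hf' hm hd2 hα hmin hK0.le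
      (X t ω) (X s ω)

/-- Linear decrease in expectation of the weighted error:
`E[‖D(x(t−1))^{1/2}(x(t) − x*)‖] ≤ (2(2(1−δ)+αM)(F(x(0)) − F*)/(αm))^{1/2} ((1 − β)^{1/2})^t`. -/
theorem stmt18 (n : ℕ) (hn : 1 ≤ n)
    (W : Matrix (Fin n) (Fin n) ℝ) (hWsymm : W.IsSymm)
    (hWnonneg : ∀ i j, 0 ≤ W i j) (hWlt : ∀ i j, W i j < 1)
    (hWone : W.mulVec (fun _ => 1) = fun _ => 1)
    (hWnull : ∀ x : Fin n → ℝ, ((1 - W).mulVec x = 0 ↔ ∃ c : ℝ, x = fun _ => c))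
    (δ Δ : ℝ) (hδ : 0 < δ) (hδΔ : δ ≤ Δ) (hΔ : Δ < 1)
    (hWdiag : ∀ i, δ ≤ W i i ∧ W i i ≤ Δ)
    (f : Fin n → ℝ → ℝ) (hf : ∀ i, ContDiff ℝ 2 (f i))
    (hconv : ∀ i, ConvexOn ℝ Set.univ (f i))
    (m M : ℝ) (hm : 0 < m) (hmM : m ≤ M)
    (hd2 : ∀ i s, m ≤ d2 f i s ∧ d2 f i s ≤ M)
    (α : ℝ) (hα : 0 < α)
    (p : Fin n → ℝ) (pmin pmax : ℝ) (hpmin : 0 < pmin) (hpmax : pmax < 1)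
    (hp : ∀ i, pmin ≤ p i ∧ p i ≤ pmax) (hpsum : ∑ i, p i = 1)
    (xstar : Fin n → ℝ) (hmin : ∀ y, Fobj W f α xstar ≤ Fobj W f α y)
    (ρ lam Lam : ℝ) (hρ : ρ = 2 * (1 - δ) / (2 * (1 - δ) + α * m))
    (hlam : lam = 1 / (2 * (1 - δ) + α * M))
    (hLam : Lam = (1 + ρ) / (2 * (1 - Δ) + α * m))
    (ε : ℝ) (hε : 0 < ε) (hεlt : ε < min (1 / 2) (2 * pmin * (lam / Lam) ^ 2))
    (β : ℝ) (hβ : β = α * m * ε * (2 * pmin * lam ^ 2 - ε * Lam ^ 2) / (lam * pmin))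
    (Ω : Type*) [MeasurableSpace Ω] (μ : MeasureTheory.Measure Ω)
    [MeasureTheory.IsProbabilityMeasure μ]
    (I : ℕ → Ω → Fin n) (hImeas : ∀ t, Measurable (I t))
    (hIindep : ProbabilityTheory.iIndepFun I μ)
    (hIdist : ∀ t i, μ {ω | I t ω = i} = ENNReal.ofReal (p i))
    (x0 : Fin n → ℝ) (X : ℕ → Ω → Fin n → ℝ)
    (hX0 : ∀ ω, X 0 ω = x0)
    (hXsucc : ∀ (t : ℕ) (ω : Ω), X (t + 1) ω = upd W f α p ε (X t ω) (I (t + 1) ω))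
    : ∀ t : ℕ, 1 ≤ t →
      ∫ ω, _root_.enorm ((Dhalf W f α (X (t - 1) ω)).mulVec (X t ω - xstar)) ∂μ ≤
        Real.sqrt (2 * (2 * (1 - δ) + α * M) *
            (Fobj W f α x0 - Fobj W f α xstar) / (α * m)) *
          Real.sqrt (1 - β) ^ t := by
  exact fun t _ => stmt18_general hWsymm (mem_rowStochastic.2 ⟨hWnonneg, hWone⟩) hΔ.le hWdiag
    (fun i => (hf i).differentiable two_ne_zero) (fun i => (hf i).differentiable_deriv_two)
    hm hd2 hα hpmin (fun i => (hp i).1) hpsum hmin hρ hlam hLam hε.le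
    (hεlt.le.trans (min_le_right _ _)) hβ hImeas hIindep hIdist hX0 hXsucc (t - 1) t
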